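/- Let k > 2 be even, let k divide n with n/k > 2, let r ∈ (ℤ/nℤ)^×, and let X = {((j·n/k) + (−1)^j)·r : j = 0, 1, …, k−1} ⊆ ℤ/nℤ (these k elements are distinct). Then for every y ∈ ℤ/nℤ with integer representative ỹ: σ_X(y) = k·cos(2πr̃ỹ/n) if k divides ỹ; σ_X(y) = i·k·sin(2πr̃ỹ/n) if ỹ ≡ k/2 (mod k); and σ_X(y) = 0 otherwise, where r̃ is an integer representative of r. -/

import Mathlib

open Complex

/-- `e(θ) = exp(2πiθ)`. -/
noncomputable def e2 (θ : ℝ) : ℂ := Complex.exp (2 * Real.pi * Complex.I * θ)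

/-- The cyclic supercharacter attached to a subset `X` of `ℤ/nℤ`:
`σ_X(y) = Σ_{x ∈ X} e(xy/n)`. -/
noncomputable def superchar (n : ℕ) (X : Set (ZMod n)) (y : ZMod n) : ℂ :=
  ∑ᶠ x ∈ X, e2 (((x.val * y.val : ℕ) : ℝ) / (n : ℝ))

/-- The orbit `Ar = {ar : a ∈ A}` of `r` under a unit subgroup `A`. -/
def unitOrbit (n : ℕ) (A : Subgroup (ZMod n)ˣ) (r : ZMod n) : Set (ZMod n) :=
  (fun a : (ZMod n)ˣ => (a : ZMod n) * r) '' (A : Set (ZMod n)ˣ)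


theorem e2_eq_char (n : ℕ) [NeZero n] (x y : ZMod n) :
    e2 (((x.val * y.val : ℕ) : ℝ) / (n : ℝ)) = ZMod.stdAddChar (x * y) := by
  have h : x * y = (((x.val * y.val : ℕ) : ℤ) : ZMod n) := by
    push_cast
    simp
  rw [h, ZMod.stdAddChar_coe, e2]
  congr 1
  push_cast
  ring

theorem char_pow_eq_one (n k c : ℕ) [NeZero n] (hk : 0 < k) (hkn : k ∣ n)
    (r : (ZMod n)ˣ) (y : ZMod n) :
    (ZMod.stdAddChar (((n / k : ℕ) : ZMod n) * (r : ZMod n) * y)) ^ c = (1 : ℂ) ↔ k ∣ c * y.val := by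
  rw [← AddChar.map_nsmul_eq_pow, ← AddChar.map_zero_eq_one (ZMod.stdAddChar (N := n)),
    (ZMod.injective_stdAddChar).eq_iff]
  have h : c • (((n / k : ℕ) : ZMod n) * (r : ZMod n) * y)
      = ((n / k * (c * y.val) : ℕ) : ZMod n) * r := by
    push_cast
    simp
    ring
  rw [h, Units.mul_left_eq_zero, ZMod.natCast_eq_zero_iff]
  obtain ⟨q, rfl⟩ := hkn
  have hq : 0 < q := Nat.pos_of_ne_zero (fun h => NeZero.ne (k * q) (by simp [h]))
  rw [Nat.mul_div_cancel_left q hk, mul_comm q (c * y.val), Nat.mul_dvd_mul_iff_right hq]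

theorem sum_range_two_mul (f : ℕ → ℂ) (m : ℕ) :
    ∑ j ∈ Finset.range (2 * m), f j = ∑ i ∈ Finset.range m, (f (2 * i) + f (2 * i + 1)) := by
  induction m with
  | zero => simp
  | succ m ih =>
    rw [show 2 * (m + 1) = 2 * m + 1 + 1 by ring, Finset.sum_range_succ, Finset.sum_range_succ,
      Finset.sum_range_succ, ih]
    ring

theorem stmt12 (n k : ℕ) (hk2 : 2 < k) (hke : Even k) (hkn : k ∣ n) (hnk : 2 < n / k)
    (r : (ZMod n)ˣ)
    (X : Set (ZMod n))
    (hX : X = (fun j : ℕ => (((j * (n / k) : ℕ) : ZMod n) + (-1 : ZMod n) ^ j) * (r : ZMod n))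
      '' (Set.Iio k))
    (hdist : Set.InjOn
      (fun j : ℕ => (((j * (n / k) : ℕ) : ZMod n) + (-1 : ZMod n) ^ j) * (r : ZMod n))
      (Set.Iio k))
    (y : ZMod n) :
    (k ∣ y.val → superchar n X y
        = (k : ℂ) * ((Real.cos (2 * Real.pi * (((r : ZMod n).val * y.val : ℕ) : ℝ) / (n : ℝ)) : ℝ) : ℂ))
    ∧ (y.val % k = k / 2 → superchar n X y
        = Complex.I * (k : ℂ) *
            ((Real.sin (2 * Real.pi * (((r : ZMod n).val * y.val : ℕ) : ℝ) / (n : ℝ)) : ℝ) : ℂ))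
    ∧ (¬ k ∣ y.val → y.val % k ≠ k / 2 → superchar n X y = 0) := by
  have hn : n ≠ 0 := by
    rintro rfl
    simp at hnk
  have : NeZero n := ⟨hn⟩
  obtain ⟨m, hm⟩ := hke
  have hk : k = 2 * m := by omega
  have hk0 : 0 < k := by omega
  set w : ℂ := ZMod.stdAddChar (((n / k : ℕ) : ZMod n) * (r : ZMod n) * y) with hw
  set z : ℂ := ZMod.stdAddChar ((r : ZMod n) * y) with hz
  have hpow := fun c => char_pow_eq_one n k c hk0 hkn r y
  rw [← hw] at hpow
  have hinv : (ZMod.stdAddChar (-((r : ZMod n) * y)) : ℂ) = z⁻¹ := by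
    rw [AddChar.map_neg_eq_inv]
  have hsum : superchar n X y
      = (z + w * z⁻¹) * ∑ i ∈ Finset.range m, (w ^ 2) ^ i := by
    unfold superchar
    simp_rw [e2_eq_char]
    rw [hX, finsum_mem_image hdist,
      show (Set.Iio k) = ((Finset.range (2 * m) : Finset ℕ) : Set ℕ) by ext; simp [hk],
      finsum_mem_coe_finset, sum_range_two_mul, Finset.mul_sum]
    refine Finset.sum_congr rfl fun i _ => ?_
    have h1 : ((((2 * i) * (n / k) : ℕ) : ZMod n) + (-1 : ZMod n) ^ (2 * i)) * (r : ZMod n) * y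
        = (2 * i) • (((n / k : ℕ) : ZMod n) * (r : ZMod n) * y) + r * y := by
      rw [pow_mul, neg_one_sq, one_pow, nsmul_eq_mul]
      push_cast
      ring
    have h2 : ((((2 * i + 1) * (n / k) : ℕ) : ZMod n) + (-1 : ZMod n) ^ (2 * i + 1))
          * (r : ZMod n) * y
        = (2 * i + 1) • (((n / k : ℕ) : ZMod n) * (r : ZMod n) * y) + -(r * y) := by
      rw [pow_succ, pow_mul, neg_one_sq, one_pow, nsmul_eq_mul]
      push_cast
      ring
    rw [h1, h2, AddChar.map_add_eq_mul, AddChar.map_add_eq_mul, AddChar.map_nsmul_eq_pow,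
      AddChar.map_nsmul_eq_pow, hinv, ← hw, ← hz]
    ring
  have hzexp : z = Complex.exp
      (((2 * Real.pi * (((r : ZMod n).val * y.val : ℕ) : ℝ) / (n : ℝ) : ℝ) : ℂ) * Complex.I) := by
    rw [hz, ← e2_eq_char, e2]
    congr 1
    push_cast
    ring
  set t : ℝ := 2 * Real.pi * (((r : ZMod n).val * y.val : ℕ) : ℝ) / (n : ℝ)
  have hzinv : z⁻¹ = Complex.exp (-(t : ℂ) * Complex.I) := by
    rw [hzexp, ← Complex.exp_neg]
    ring_nf
  have hkm : (k : ℂ) = 2 * m := by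
    rw [hk]
    push_cast
    ring
  refine ⟨fun h => ?_, fun h => ?_, fun h1 h2 => ?_⟩
  · have hw1 : w = 1 := by
      rw [← pow_one w]
      exact (hpow 1).2 (by simpa using h)
    rw [hsum, hw1, hzinv, hzexp, Complex.exp_mul_I, Complex.exp_mul_I, hkm]
    simp
    ring
  · have hw2 : w ^ 2 = 1 := by
      refine (hpow 2).2 ⟨2 * (y.val / k) + 1, ?_⟩
      have := Nat.div_add_mod y.val k
      rw [h, hk, Nat.mul_div_cancel_left m two_pos] at this
      rw [hk]
      linarith
    have hw1 : w ≠ 1 := by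
      intro hc
      have := (hpow 1).1 (by simpa using hc)
      rw [one_mul] at this
      have := Nat.mod_eq_zero_of_dvd this
      omega
    have hwn : w = -1 := (by simpa using hw2 : w = 1 ∨ w = -1).resolve_left hw1
    rw [hsum, hw2, hwn, hzinv, hzexp, Complex.exp_mul_I, Complex.exp_mul_I, hkm]
    simp
    ring
  · have hw2 : w ^ 2 ≠ 1 := by
      intro hc
      obtain ⟨q, hq⟩ := (hpow 2).1 hc
      have hyq : y.val = m * q := by
        rw [hk] at hq
        nlinarith
      rcases Nat.even_or_odd' q with ⟨s, rfl | rfl⟩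
      · exact h1 ⟨s, by rw [hyq, hk]; ring⟩
      · apply h2
        rw [hyq, hk, show m * (2 * s + 1) = m + 2 * m * s by ring, Nat.add_mul_mod_self_left,
          Nat.mod_eq_of_lt (by omega), Nat.mul_div_cancel_left m two_pos]
    have hwm : (w ^ 2) ^ m = 1 := by
      rw [← pow_mul, ← hk]
      exact (hpow k).2 (dvd_mul_right _ _)
    rw [hsum, geom_sum_eq hw2, hwm]
    simp
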